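/- Let σ0 > 0, a < b real numbers, n ≥ 1 an integer, φ0 = γ_{0,σ0}, and let λ_n be the unique minimizer over λ ∈ [a,b] of ∫_a^b |t − λ|^n φ0(t) dt. Set C := min_{t∈[a,b]} φ0(t) and D := max_{t∈[a,b]} φ0(t). Then ∫_a^b |t − λ_n|^n φ0(t) dt ≥ ((b−a)^{n+1}/((n+1)·2^{n+1}))·(1 + (D/C)^{−(n+1)/n})·C. -/

import Mathlib

/-!
Write `u = lam - a` and `v = b - lam`. Bounding the weight below by `C` gives
`(n + 1) ∫ |t - lam| ^ n φ ≥ C (u ^ (n + 1) + v ^ (n + 1))`, so it suffices to show that the larger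
of `u`, `v`, which is at least `(b - a) / 2`, does not exceed the smaller one by a factor of more
than `(D / C) ^ (1 / n)`.

This is the first-order optimality condition in the form `C u ^ n ≤ D v ^ n`
(`first_order_left`), obtained by comparing `lam` with `lam - h` for small `h > 0`: the gain to the
left of `lam - h` is bounded below with the weight `C`, the loss to the right of it is bounded above
with the weight `D`, and dividing the resulting polynomial inequality by `h` and letting `h → 0`
gives the claim. The one-sided perturbation also covers `lam = b`. The mirror inequality
`C v ^ n ≤ D u ^ n` (`first_order_right`) follows by the reflection `t ↦ -t`.
The argument works for any continuous weight with `0 < C ≤ φ ≤ D`.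
-/

open MeasureTheory

/-- Centered Gaussian pdf of standard deviation σ. -/
noncomputable def gaussPdf (σ t : ℝ) : ℝ :=
  (2 * Real.pi * σ ^ 2) ^ (-(1:ℝ) / 2) * Real.exp (-(t ^ 2) / (2 * σ ^ 2))

lemma integral_pow_right (c x y : ℝ) (n : ℕ) :
    ∫ t in x..y, (t - c) ^ n = ((y - c) ^ (n + 1) - (x - c) ^ (n + 1)) / (n + 1) := by
  rw [intervalIntegral.integral_comp_sub_right (fun t => t ^ n), integral_pow]

lemma integral_pow_left (c x y : ℝ) (n : ℕ) :
    ∫ t in x..y, (c - t) ^ n = ((c - x) ^ (n + 1) - (c - y) ^ (n + 1)) / (n + 1) := by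
  rw [intervalIntegral.integral_comp_sub_left (fun t => t ^ n), integral_pow]

/-- Comparison of the candidates `lam` and `lam - h`, before dividing by `h`. -/
lemma perturbation_left (g : ℝ → ℝ) (hg : Continuous g) (a b C D : ℝ) (n : ℕ)
    (hgC : ∀ t ∈ Set.Icc a b, C ≤ g t)
    (hgD : ∀ t ∈ Set.Icc a b, g t ≤ D) (hC0 : 0 < C) (lam : ℝ) (hmem : lam ∈ Set.Icc a b)
    (h : ℝ) (h0 : 0 < h) (hh : h ≤ lam - a)
    (hopt : ∫ t in a..b, |t - lam| ^ n * g t ≤ ∫ t in a..b, |t - (lam - h)| ^ n * g t) :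
    C * ((lam - a) ^ (n + 1) - (lam - a - h) ^ (n + 1) - h ^ (n + 1)) ≤
      D * ((b - lam + h) ^ (n + 1) - (b - lam) ^ (n + 1)) := by
  obtain ⟨ha, hb⟩ := hmem
  set F : ℝ → ℝ := fun t => (|t - (lam - h)| ^ n - |t - lam| ^ n) * g t with hF
  have hFc : Continuous F := by fun_prop
  have hi : ∀ x y, IntervalIntegrable F volume x y := fun x y => hFc.intervalIntegrable x y
  have h1 : 0 ≤ ∫ t in a..b, F t := by
    have : ∫ t in a..b, F t =
        (∫ t in a..b, |t - (lam - h)| ^ n * g t) - ∫ t in a..b, |t - lam| ^ n * g t := by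
      rw [← intervalIntegral.integral_sub
        (Continuous.intervalIntegrable (by fun_prop) _ _)
        (Continuous.intervalIntegrable (by fun_prop) _ _)]
      simp only [hF, sub_mul]
    linarith
  have e : ∫ t in a..b, F t =
      (∫ t in a..(lam - h), F t) + (∫ t in (lam - h)..lam, F t) + ∫ t in lam..b, F t := by
    rw [intervalIntegral.integral_add_adjacent_intervals (hi _ _) (hi _ _),
      intervalIntegral.integral_add_adjacent_intervals (hi _ _) (hi _ _)]
  have b1 : ∫ t in a..(lam - h), F t ≤
      ∫ t in a..(lam - h), C * ((lam - h - t) ^ n - (lam - t) ^ n) := by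
    refine intervalIntegral.integral_mono_on (by linarith) (hi _ _)
      (Continuous.intervalIntegrable (by fun_prop) _ _) fun t ht => ?_
    obtain ⟨ht1, ht2⟩ := ht
    have hp : (lam - h - t) ^ n ≤ (lam - t) ^ n :=
      pow_le_pow_left₀ (by linarith) (by linarith) n
    have hc := hgC t ⟨ht1, by linarith⟩
    simp only [hF]
    rw [abs_sub_comm t, abs_sub_comm t, abs_of_nonneg (by linarith : 0 ≤ lam - h - t),
      abs_of_nonneg (by linarith : 0 ≤ lam - t)]
    nlinarith
  -- On this short interval the negative term of `F` is discarded; the loss is `O(h ^ (n + 1))`,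
  -- hence negligible after division by `h`, since `n ≥ 1`.
  have b2 : ∫ t in (lam - h)..lam, F t ≤ ∫ t in (lam - h)..lam, D * (t - (lam - h)) ^ n := by
    refine intervalIntegral.integral_mono_on (by linarith) (hi _ _)
      (Continuous.intervalIntegrable (by fun_prop) _ _) fun t ht => ?_
    obtain ⟨ht1, ht2⟩ := ht
    have hc := hgC t ⟨by linarith, by linarith⟩
    have hd := hgD t ⟨by linarith, by linarith⟩
    have hp : 0 ≤ |t - lam| ^ n := by positivity
    have hq : 0 ≤ (t - (lam - h)) ^ n := pow_nonneg (by linarith) n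
    simp only [hF]
    rw [abs_of_nonneg (by linarith : 0 ≤ t - (lam - h))]
    nlinarith
  have b3 : ∫ t in lam..b, F t ≤
      ∫ t in lam..b, D * ((t - (lam - h)) ^ n - (t - lam) ^ n) := by
    refine intervalIntegral.integral_mono_on (by linarith) (hi _ _)
      (Continuous.intervalIntegrable (by fun_prop) _ _) fun t ht => ?_
    obtain ⟨ht1, ht2⟩ := ht
    have hp : (t - lam) ^ n ≤ (t - (lam - h)) ^ n :=
      pow_le_pow_left₀ (by linarith) (by linarith) n
    have hd := hgD t ⟨by linarith, by linarith⟩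
    simp only [hF]
    rw [abs_of_nonneg (by linarith : 0 ≤ t - (lam - h)), abs_of_nonneg (by linarith : 0 ≤ t - lam)]
    nlinarith
  rw [intervalIntegral.integral_const_mul, intervalIntegral.integral_sub
    (Continuous.intervalIntegrable (by fun_prop) _ _)
    (Continuous.intervalIntegrable (by fun_prop) _ _), integral_pow_left, integral_pow_left] at b1
  rw [intervalIntegral.integral_const_mul, integral_pow_right] at b2
  rw [intervalIntegral.integral_const_mul, intervalIntegral.integral_sub
    (Continuous.intervalIntegrable (by fun_prop) _ _)
    (Continuous.intervalIntegrable (by fun_prop) _ _), integral_pow_right, integral_pow_right] at b3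
  have hsum := h1.trans (e.le.trans (add_le_add (add_le_add b1 b2) b3))
  have hn1 : (0 : ℝ) < n + 1 := by positivity
  have key := mul_nonneg hn1.le hsum
  have r1 : lam - h - a = lam - a - h := by ring
  have r2 : b - (lam - h) = b - lam + h := by ring
  have r3 : lam - (lam - h) = h := by ring
  simp only [r1, r2, r3, sub_self, ne_eq, Nat.add_eq_zero_iff, one_ne_zero, and_false,
    not_false_eq_true, zero_pow] at key
  field_simp at key
  linarith

/-- One-sided first-order optimality condition; for `lam = a` it holds trivially. -/
lemma first_order_left (g : ℝ → ℝ) (hg : Continuous g) (a b C D : ℝ) (n : ℕ) (hn : 1 ≤ n)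
    (hgC : ∀ t ∈ Set.Icc a b, C ≤ g t)
    (hgD : ∀ t ∈ Set.Icc a b, g t ≤ D) (hC0 : 0 < C) (lam : ℝ) (hmem : lam ∈ Set.Icc a b)
    (hopt : ∀ lam' ∈ Set.Icc a b,
      ∫ t in a..b, |t - lam| ^ n * g t ≤ ∫ t in a..b, |t - lam'| ^ n * g t) :
    C * (lam - a) ^ n ≤ D * (b - lam) ^ n := by
  have hD0 : 0 < D := hC0.trans_le ((hgC _ hmem).trans (hgD _ hmem))
  rcases hmem.1.eq_or_lt with rfl | hlt
  · rw [sub_self, zero_pow (by omega), mul_zero]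
    exact mul_nonneg hD0.le (pow_nonneg (by linarith [hmem.2]) n)
  set p : ℝ → ℝ := fun h => D * ((b - lam + h) ^ (n + 1) - (b - lam) ^ (n + 1)) -
    C * ((lam - a) ^ (n + 1) - (lam - a - h) ^ (n + 1) - h ^ (n + 1)) with hp
  have hp0 : p 0 = 0 := by simp [hp]
  have hder : HasDerivAt p ((n + 1) * (D * (b - lam) ^ n - C * (lam - a) ^ n)) 0 := by
    have d1 := (((hasDerivAt_id (0 : ℝ)).const_add (b - lam)).pow (n + 1)).sub_const
      ((b - lam) ^ (n + 1))
    have d2 := ((((hasDerivAt_id (0 : ℝ)).const_sub (lam - a)).pow (n + 1)).const_sub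
      ((lam - a) ^ (n + 1))).sub ((hasDerivAt_id (0 : ℝ)).pow (n + 1))
    have d := (d1.const_mul D).sub (d2.const_mul C)
    refine HasDerivAt.congr_deriv (f := p) d ?_
    have : n ≠ 0 := by omega
    simp [this]
    ring
  have hlim := hder.tendsto_slope.mono_left
    (nhdsWithin_mono 0 (fun x (hx : x ∈ Set.Ioi (0 : ℝ)) => (ne_of_gt hx : x ≠ 0)))
  have hge : 0 ≤ (n + 1) * (D * (b - lam) ^ n - C * (lam - a) ^ n) := by
    refine ge_of_tendsto hlim ?_
    filter_upwards [Ioc_mem_nhdsGT (sub_pos.2 hlt)] with h hh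
    rw [slope_def_field, hp0]
    have := perturbation_left g hg a b C D n hgC hgD hC0 lam hmem h hh.1 hh.2
      (hopt _ ⟨by linarith [hh.2], by linarith [hh.1, hmem.2]⟩)
    have hph : 0 ≤ p h := by simp only [hp]; linarith
    exact div_nonneg (by linarith) (by linarith [hh.1])
  have hn1 : (0 : ℝ) < n + 1 := by positivity
  linarith [nonneg_of_mul_nonneg_right hge hn1]

lemma first_order_right (g : ℝ → ℝ) (hg : Continuous g) (a b C D : ℝ) (n : ℕ) (hn : 1 ≤ n)
    (hgC : ∀ t ∈ Set.Icc a b, C ≤ g t)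
    (hgD : ∀ t ∈ Set.Icc a b, g t ≤ D) (hC0 : 0 < C) (lam : ℝ) (hmem : lam ∈ Set.Icc a b)
    (hopt : ∀ lam' ∈ Set.Icc a b,
      ∫ t in a..b, |t - lam| ^ n * g t ≤ ∫ t in a..b, |t - lam'| ^ n * g t) :
    C * (b - lam) ^ n ≤ D * (lam - a) ^ n := by
  have hneg : ∀ t ∈ Set.Icc (-b) (-a), -t ∈ Set.Icc a b := fun t ht =>
    ⟨by linarith [ht.2], by linarith [ht.1]⟩
  have hrefl : ∀ x : ℝ, ∫ t in (-b)..(-a), |t - x| ^ n * g (-t) =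
      ∫ t in a..b, |t - -x| ^ n * g t := fun x => by
    have := intervalIntegral.integral_comp_neg (a := -b) (b := -a)
      (fun t => |t - -x| ^ n * g t)
    rw [neg_neg, neg_neg] at this
    rw [← this]
    refine intervalIntegral.integral_congr fun t _ => ?_
    rw [← abs_neg (t - x)]
    congr 3
    ring
  have := first_order_left (fun t => g (-t)) (by fun_prop) (-b) (-a) C D n hn
    (fun t ht => hgC _ (hneg t ht)) (fun t ht => hgD _ (hneg t ht)) hC0 (-lam)
    ⟨by linarith [hmem.2], by linarith [hmem.1]⟩ (fun x hx => by
      rw [hrefl, hrefl, neg_neg]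
      exact hopt _ (hneg x hx))
  convert this using 3 <;> ring

/-- The bound `C u ^ n ≤ D v ^ n` reads `v ≥ (D / C) ^ (-1 / n) u`, and `u` is at least the
average of `u` and `v`. -/
lemma sum_pow_lower_bound (u v C D : ℝ) (n : ℕ) (hn : 1 ≤ n) (hC : 0 < C) (hD : 0 < D)
    (hv : 0 ≤ v) (hvu : v ≤ u) (h : C * u ^ n ≤ D * v ^ n) :
    ((u + v) / 2) ^ (n + 1) * (1 + (D / C) ^ (-((n : ℝ) + 1) / (n : ℝ))) ≤
      u ^ (n + 1) + v ^ (n + 1) := by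
  have hr : 0 < D / C := by positivity
  have hn0 : (n : ℝ) ≠ 0 := by positivity
  set x : ℝ := (D / C) ^ (-1 / (n : ℝ)) with hx
  have hx0 : 0 < x := Real.rpow_pos_of_pos hr _
  have hxn : x ^ n = C / D := by
    rw [hx, ← Real.rpow_mul_natCast hr.le, div_mul_cancel₀ _ hn0, Real.rpow_neg_one, inv_div]
  have hxn1 : (D / C) ^ (-((n : ℝ) + 1) / (n : ℝ)) = x ^ (n + 1) := by
    rw [hx, ← Real.rpow_mul_natCast hr.le]
    congr 1
    push_cast
    ring
  have hxuv : x * u ≤ v := by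
    refine le_of_pow_le_pow_left₀ (n := n) (by omega) hv ?_
    rw [mul_pow, hxn, div_mul_eq_mul_div, div_le_iff₀ hD]
    linarith
  have hm : (u + v) / 2 ≤ u := by linarith
  have hm0 : 0 ≤ (u + v) / 2 := by linarith
  have i1 : ((u + v) / 2) ^ (n + 1) ≤ u ^ (n + 1) := pow_le_pow_left₀ hm0 hm _
  have i2 : (x * ((u + v) / 2)) ^ (n + 1) ≤ v ^ (n + 1) :=
    pow_le_pow_left₀ (by positivity) ((mul_le_mul_of_nonneg_left hm hx0.le).trans hxuv) _
  rw [mul_pow] at i2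
  rw [hxn1]
  linarith

lemma integral_lower_bound (g : ℝ → ℝ) (hg : Continuous g) (a b C : ℝ) (n : ℕ)
    (hgC : ∀ t ∈ Set.Icc a b, C ≤ g t) (lam : ℝ) (hmem : lam ∈ Set.Icc a b) :
    C * ((lam - a) ^ (n + 1) + (b - lam) ^ (n + 1)) / (n + 1) ≤
      ∫ t in a..b, |t - lam| ^ n * g t := by
  have hi : ∀ x y, IntervalIntegrable (fun t => |t - lam| ^ n * g t) volume x y :=
    fun x y => Continuous.intervalIntegrable (by fun_prop) x y
  rw [← intervalIntegral.integral_add_adjacent_intervals (hi a lam) (hi lam b)]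
  have b1 : ∫ t in a..lam, C * (lam - t) ^ n ≤ ∫ t in a..lam, |t - lam| ^ n * g t := by
    refine intervalIntegral.integral_mono_on hmem.1
      (Continuous.intervalIntegrable (by fun_prop) _ _) (hi _ _) fun t ht => ?_
    have hc := hgC t ⟨ht.1, ht.2.trans hmem.2⟩
    have h0 : 0 ≤ lam - t := sub_nonneg.2 ht.2
    rw [abs_sub_comm, abs_of_nonneg h0, mul_comm]
    exact mul_le_mul_of_nonneg_left hc (pow_nonneg h0 n)
  have b2 : ∫ t in lam..b, C * (t - lam) ^ n ≤ ∫ t in lam..b, |t - lam| ^ n * g t := by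
    refine intervalIntegral.integral_mono_on hmem.2
      (Continuous.intervalIntegrable (by fun_prop) _ _) (hi _ _) fun t ht => ?_
    have hc := hgC t ⟨hmem.1.trans ht.1, ht.2⟩
    have h0 : 0 ≤ t - lam := sub_nonneg.2 ht.1
    rw [abs_of_nonneg h0, mul_comm]
    exact mul_le_mul_of_nonneg_left hc (pow_nonneg h0 n)
  rw [intervalIntegral.integral_const_mul, integral_pow_left] at b1
  rw [intervalIntegral.integral_const_mul, integral_pow_right] at b2
  refine le_trans (le_of_eq ?_) (add_le_add b1 b2)
  simp only [sub_self, ne_eq, Nat.add_eq_zero_iff, one_ne_zero, and_false, not_false_eq_true,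
    zero_pow]
  ring

lemma gaussPdf_continuous (σ : ℝ) : Continuous (gaussPdf σ) := by
  unfold gaussPdf
  fun_prop

lemma gaussPdf_pos {σ : ℝ} (hσ : 0 < σ) (t : ℝ) : 0 < gaussPdf σ t := by
  unfold gaussPdf
  positivity

theorem p_moment_lower_bound
    (σ0 : ℝ) (hσ0 : 0 < σ0) (a b : ℝ) (hab : a < b) (n : ℕ) (hn : 1 ≤ n)
    (C D : ℝ)
    (hC : C = sInf (gaussPdf σ0 '' Set.Icc a b))
    (hD : D = sSup (gaussPdf σ0 '' Set.Icc a b))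
    (lam : ℝ) (hmem : lam ∈ Set.Icc a b)
    (hopt : ∀ lam' ∈ Set.Icc a b,
      ∫ t in Set.Icc a b, |t - lam| ^ n * gaussPdf σ0 t ≤
        ∫ t in Set.Icc a b, |t - lam'| ^ n * gaussPdf σ0 t) :
    ((b - a) ^ (n + 1) / (((n : ℝ) + 1) * 2 ^ (n + 1))) *
        (1 + (D / C) ^ (-((n : ℝ) + 1) / (n : ℝ))) * C ≤
      ∫ t in Set.Icc a b, |t - lam| ^ n * gaussPdf σ0 t := by
  have hg := gaussPdf_continuous σ0
  have hK : IsCompact (gaussPdf σ0 '' Set.Icc a b) := isCompact_Icc.image hg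
  have hne : (gaussPdf σ0 '' Set.Icc a b).Nonempty := (Set.nonempty_Icc.2 hab.le).image _
  have hC0 : 0 < C := by
    obtain ⟨t, -, ht⟩ := hK.sInf_mem hne
    rw [hC, ← ht]
    exact gaussPdf_pos hσ0 t
  have hgC : ∀ t ∈ Set.Icc a b, C ≤ gaussPdf σ0 t := fun t ht =>
    hC ▸ csInf_le hK.bddBelow (Set.mem_image_of_mem _ ht)
  have hgD : ∀ t ∈ Set.Icc a b, gaussPdf σ0 t ≤ D := fun t ht =>
    hD ▸ le_csSup hK.bddAbove (Set.mem_image_of_mem _ ht)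
  have hD0 : 0 < D := hC0.trans_le ((hgC _ hmem).trans (hgD _ hmem))
  simp only [integral_Icc_eq_integral_Ioc, ← intervalIntegral.integral_of_le hab.le] at hopt ⊢
  have hu : 0 ≤ lam - a := sub_nonneg.2 hmem.1
  have hv : 0 ≤ b - lam := sub_nonneg.2 hmem.2
  have hsum : ((b - a) / 2) ^ (n + 1) * (1 + (D / C) ^ (-((n : ℝ) + 1) / (n : ℝ))) ≤
      (lam - a) ^ (n + 1) + (b - lam) ^ (n + 1) := by
    rcases le_total (b - lam) (lam - a) with hle | hle
    · have := sum_pow_lower_bound _ _ C D n hn hC0 hD0 hv hle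
        (first_order_left _ hg a b C D n hn hgC hgD hC0 lam hmem hopt)
      rwa [show lam - a + (b - lam) = b - a by ring] at this
    · have := sum_pow_lower_bound _ _ C D n hn hC0 hD0 hu hle
        (first_order_right _ hg a b C D n hn hgC hgD hC0 lam hmem hopt)
      rwa [show b - lam + (lam - a) = b - a by ring,
        add_comm ((b - lam) ^ (n + 1))] at this
  refine le_trans ?_ (integral_lower_bound _ hg a b C n hgC lam hmem)
  have hn1 : (0 : ℝ) < n + 1 := by positivity
  rw [le_div_iff₀ hn1]
  refine le_trans (le_of_eq ?_) (mul_le_mul_of_nonneg_left hsum hC0.le)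
  rw [div_pow]
  field_simp
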